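/- (New weighted lower risk bound, Theorem 3.1.) Let d ≥ 1, β = (β_1,…,β_d) with 0 < β_i ≤ 2 for all i, L > 0 and r ≥ 1. Then there exist a constant c₂(β,L,r) > 0 and n₀(β,L) ∈ ℕ such that for every t ∈ ℝ^d and every n ≥ n₀(β,L): inf_{0 < δ ≤ c₁(β,L)} inf_{T_n} sup { E_p^{⊗n} ( |T_n(X_1,…,X_n) − p(t)| / ψ^n_{p(t),β} )^r : p ∈ 𝒫_d(β,L), δ/2 ≤ p(t) ≤ δ } ≥ c₂(β,L,r), where the inner infimum runs over all measurable maps T_n : (ℝ^d)^n → ℝ, and ψ^n_{x,β} := min{ x, (x/n)^{β̄/(2β̄+1)} }. -/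

import Mathlib

open MeasureTheory Real
open scoped ENNReal BigOperators

noncomputable section

/-- `Vec d` is `ℝ^d` (with the product structure, used for anisotropic statements). -/
abbrev Vec (d : ℕ) := Fin d → ℝ

/-- Samples of size `n` from `ℝ^d`. -/
abbrev Sample (d n : ℕ) := Fin n → Vec d

/-- The largest integer strictly smaller than `b` (for `b > 0`), i.e. `⌊b⌋` in the paper's
anisotropic Hölder class notation. -/
def hfl (b : ℝ) : ℕ := ⌈b⌉₊ - 1

/-- One-dimensional Taylor polynomial of `f` at `y'` of degree `l`, evaluated at `y`. -/
def taylorPoly (f : ℝ → ℝ) (l : ℕ) (y' y : ℝ) : ℝ :=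
  ∑ k ∈ Finset.range (l + 1), iteratedDeriv k f y' / (Nat.factorial k : ℝ) * (y - y') ^ k

/-- The slice of `f : ℝ^d → ℝ` along coordinate `i` through the point `x`. -/
def sliceFun {d : ℕ} (f : Vec d → ℝ) (i : Fin d) (x : Vec d) : ℝ → ℝ :=
  fun y => f (Function.update x i y)

/-- Anisotropic Hölder condition with exponents `β = (β_1, …, β_d)` and constant `L`:
in each coordinate `i`, the slices admit derivatives up to order `⌊β i⌋` (the largest
integer strictly less than `β i`) and the Taylor remainder of degree `⌊β i⌋` is bounded
by `L |y - y'| ^ (β i)`, uniformly in the remaining coordinates. For `β i ≤ 1` this is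
the usual coordinatewise Hölder condition. -/
def HolderAniso (d : ℕ) (β : Vec d) (L : ℝ) (f : Vec d → ℝ) : Prop :=
  ∀ i : Fin d,
    (∀ x : Vec d, ContDiff ℝ (hfl (β i)) (sliceFun f i x)) ∧
    ∀ (x : Vec d) (y y' : ℝ),
      |sliceFun f i x y - taylorPoly (sliceFun f i x) (hfl (β i)) y' y| ≤ L * |y - y'| ^ (β i)

/-- `p` is a probability density on `ℝ^d` (w.r.t. Lebesgue measure). -/
def IsProbDensity (d : ℕ) (p : Vec d → ℝ) : Prop :=
  Measurable p ∧ (∀ x, 0 ≤ p x) ∧ ∫ x, p x = 1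

/-- The class `𝒫_d(β, L)` of anisotropic Hölder-smooth probability densities. -/
def Pclass (d : ℕ) (β : Vec d) (L : ℝ) (p : Vec d → ℝ) : Prop :=
  IsProbDensity d p ∧ HolderAniso d β L p

/-- The unnormalized harmonic mean `β̄ = (∑ 1/β_i)⁻¹`. -/
def betaBar {d : ℕ} (β : Vec d) : ℝ := (∑ i, (β i)⁻¹)⁻¹

/-- `c₁(β, L) = sup { ‖p‖_∞ : p ∈ 𝒫_d(β, L) }`. -/
def c1const (d : ℕ) (β : Vec d) (L : ℝ) : ℝ :=
  sSup {c | ∃ p x, Pclass d β L p ∧ c = p x}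

/-- The measure on `ℝ^d` with Lebesgue density `p`. -/
def pdfMeasure (d : ℕ) (p : Vec d → ℝ) : Measure (Vec d) :=
  volume.withDensity fun x => ENNReal.ofReal (p x)

/-- The joint law `P^{⊗n}` of an i.i.d. sample of size `n` from the density `p`. -/
def jointMeasure (d n : ℕ) (p : Vec d → ℝ) : Measure (Sample d n) :=
  Measure.pi fun _ => pdfMeasure d p

/-- The `p`-dependent rate `ψ^n_{x,β} = min{ x, (x/n)^{β̄/(2β̄+1)} }` (with `bb = β̄`). -/
def psiRate (n : ℕ) (bb x : ℝ) : ℝ := min x ((x / n) ^ (bb / (2 * bb + 1)))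

end

/-- One-dimensional Hölder condition satisfied by the slices in `HolderAniso`. -/
def HolderSlice (b L : ℝ) (f : ℝ → ℝ) : Prop :=
  ContDiff ℝ (hfl b) f ∧ ∀ y y' : ℝ, |f y - taylorPoly f (hfl b) y' y| ≤ L * |y - y'| ^ b

theorem holderAniso_iff {d : ℕ} {β : Vec d} {L : ℝ} {f : Vec d → ℝ} :
    HolderAniso d β L f ↔ ∀ i x, HolderSlice (β i) L (sliceFun f i x) :=
  ⟨fun h i x => ⟨(h i).1 x, (h i).2 x⟩, fun h i => ⟨fun x => (h i x).1, fun x => (h i x).2⟩⟩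

theorem HolderSlice.mono {b L L' : ℝ} {f : ℝ → ℝ} (h : HolderSlice b L f) (hL : L ≤ L') :
    HolderSlice b L' f :=
  ⟨h.1, fun y y' => (h.2 y y').trans (by gcongr)⟩

theorem taylorPoly_add {l : ℕ} {f g : ℝ → ℝ} (hf : ContDiff ℝ l f) (hg : ContDiff ℝ l g)
    (y' y : ℝ) :
    taylorPoly (fun z => f z + g z) l y' y = taylorPoly f l y' y + taylorPoly g l y' y := by
  unfold taylorPoly
  rw [← Finset.sum_add_distrib]
  refine Finset.sum_congr rfl fun k hk => ?_
  have hk' : (k : WithTop ℕ∞) ≤ l := by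
    exact_mod_cast Nat.lt_succ_iff.mp (Finset.mem_range.mp hk)
  have := iteratedDeriv_add (hf.of_le hk').contDiffAt (hg.of_le hk').contDiffAt (x := y')
  change iteratedDeriv k (fun z => f z + g z) y' = _ at this
  rw [this]
  ring

theorem taylorPoly_affine {l : ℕ} {f : ℝ → ℝ} (hf : ContDiff ℝ l f) (a m b y' y : ℝ) :
    taylorPoly (fun z => a * f (m * z + b)) l y' y
      = a * taylorPoly f l (m * y' + b) (m * y + b) := by
  unfold taylorPoly
  rw [Finset.mul_sum]
  refine Finset.sum_congr rfl fun k hk => ?_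
  have hk' : (k : WithTop ℕ∞) ≤ l := by
    exact_mod_cast Nat.lt_succ_iff.mp (Finset.mem_range.mp hk)
  have hfk : ContDiff ℝ k fun z => f (z + b) :=
    (hf.of_le hk').comp (contDiff_id.add contDiff_const)
  have h1 : iteratedDeriv k (fun z => a * f (m * z + b)) y'
      = a * (m ^ k * iteratedDeriv k f (m * y' + b)) := by
    rw [iteratedDeriv_const_mul_field a fun z => f (m * z + b),
      congrFun (iteratedDeriv_comp_const_mul hfk m) y', iteratedDeriv_comp_add_const]
  rw [h1, show m * y + b - (m * y' + b) = m * (y - y') by ring, mul_pow]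
  ring

theorem HolderSlice.add {b L L' : ℝ} {f g : ℝ → ℝ} (hf : HolderSlice b L f)
    (hg : HolderSlice b L' g) : HolderSlice b (L + L') fun z => f z + g z := by
  refine ⟨hf.1.add hg.1, fun y y' => ?_⟩
  rw [taylorPoly_add hf.1 hg.1, add_mul, add_sub_add_comm]
  exact (abs_add_le _ _).trans (add_le_add (hf.2 y y') (hg.2 y y'))

theorem HolderSlice.affine {b L : ℝ} {f : ℝ → ℝ} (hf : HolderSlice b L f) (a m c : ℝ) :
    HolderSlice b (|a| * |m| ^ b * L) fun z => a * f (m * z + c) := by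
  refine ⟨contDiff_const.mul (hf.1.comp ((contDiff_const.mul contDiff_id).add contDiff_const)),
    fun y y' => ?_⟩
  rw [taylorPoly_affine hf.1, ← mul_sub, abs_mul]
  calc |a| * |f (m * y + c) - taylorPoly f (hfl b) (m * y' + c) (m * y + c)|
      ≤ |a| * (L * |m * y + c - (m * y' + c)| ^ b) := by gcongr; exact hf.2 _ _
    _ = |a| * |m| ^ b * L * |y - y'| ^ b := by
      rw [show m * y + c - (m * y' + c) = m * (y - y') by ring, abs_mul,
        Real.mul_rpow (abs_nonneg _) (abs_nonneg _)]
      ring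

theorem hfl_of_le_one {b : ℝ} (hb : b ≤ 1) : hfl b = 0 := by
  have : ⌈b⌉₊ ≤ 1 := by simpa using hb
  unfold hfl
  omega

theorem hfl_of_one_lt {b : ℝ} (hb1 : 1 < b) (hb : b ≤ 2) : hfl b = 1 := by
  have h1 : 1 < ⌈b⌉₊ := by rw [Nat.lt_ceil]; simpa using hb1
  have h2 : ⌈b⌉₊ ≤ 2 := by rw [Nat.ceil_le]; simpa using hb
  unfold hfl
  omega

theorem taylorPoly_zero (f : ℝ → ℝ) (y' y : ℝ) : taylorPoly f 0 y' y = f y' := by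
  simp [taylorPoly]

theorem taylorPoly_one (f : ℝ → ℝ) (y' y : ℝ) :
    taylorPoly f 1 y' y = f y' + deriv f y' * (y - y') := by
  simp [taylorPoly, Finset.sum_range_succ]

/-- A bounded function satisfying the Hölder condition has a modulus of continuity depending
only on the bound and on the Hölder parameters. -/
theorem HolderSlice.abs_sub_le {b L M : ℝ} {f : ℝ → ℝ} (hf : HolderSlice b L f) (hb0 : 0 < b)
    (hb : b ≤ 2) (hM : ∀ y, |f y| ≤ M) {y y' : ℝ} (hy : |y - y'| ≤ 1) :
    |f y - f y'| ≤ (2 * M + 2 * L) * |y - y'| ^ min b 1 := by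
  have hM0 : 0 ≤ M := (abs_nonneg _).trans (hM 0)
  have hL0 : 0 ≤ L := by
    have h := (abs_nonneg _).trans (hf.2 1 0)
    simpa using h
  rcases le_or_gt b 1 with h1 | h1
  · have h := hf.2 y y'
    rw [hfl_of_le_one h1, taylorPoly_zero] at h
    rw [min_eq_left h1]
    have : 0 ≤ |y - y'| ^ b := by positivity
    nlinarith
  · have h := hf.2 y y'
    have hd := hf.2 (y' + 1) y'
    rw [hfl_of_one_lt h1 hb, taylorPoly_one] at h hd
    rw [min_eq_right h1.le, Real.rpow_one]
    have hs : |y - y'| ^ b ≤ |y - y'| := by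
      simpa using Real.rpow_le_rpow_of_exponent_ge_of_imp (abs_nonneg (y - y')) hy h1.le
        (fun _ h => absurd h hb0.ne')
    have hderiv : |deriv f y'| ≤ 2 * M + L := by
      simp only [add_sub_cancel_left, mul_one, abs_one, Real.one_rpow] at hd
      have h3 := abs_le.mp hd
      have h4 := abs_le.mp (hM (y' + 1))
      have h5 := abs_le.mp (hM y')
      rw [abs_le]
      constructor <;> linarith
    calc |f y - f y'|
        = |(f y - (f y' + deriv f y' * (y - y'))) + deriv f y' * (y - y')| := by ring_nf
      _ ≤ L * |y - y'| ^ b + |deriv f y'| * |y - y'| := by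
        rw [← abs_mul]; exact (abs_add_le _ _).trans (by gcongr)
      _ ≤ L * |y - y'| + (2 * M + L) * |y - y'| := by gcongr
      _ = _ := by ring

/-- A bounded `C²` function with bounded first and second derivatives is Hölder of every order
`b ∈ (0, 2]`, with a constant independent of `b`. -/
theorem holderSlice_of_bounded {g : ℝ → ℝ} {M₀ M₁ M₂ : ℝ} (hg : ContDiff ℝ 2 g)
    (h0 : ∀ y, |g y| ≤ M₀) (h1 : ∀ y, |deriv g y| ≤ M₁) (h2 : ∀ y, |deriv (deriv g) y| ≤ M₂)
    {b : ℝ} (hb0 : 0 < b) (hb : b ≤ 2) : HolderSlice b (2 * M₀ + M₁ + M₂) g := by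
  have hM0 : 0 ≤ M₀ := (abs_nonneg _).trans (h0 0)
  have hM1 : 0 ≤ M₁ := (abs_nonneg _).trans (h1 0)
  have hM2 : 0 ≤ M₂ := (abs_nonneg _).trans (h2 0)
  have hdiff : Differentiable ℝ g := hg.differentiable (by norm_num)
  have hdiff' : Differentiable ℝ (deriv g) :=
    (contDiff_succ_iff_deriv (n := 1).1 (by simpa [one_add_one_eq_two] using hg)).2.2.differentiable
      (by norm_num)
  have lip0 (y y' : ℝ) : |g y - g y'| ≤ M₁ * |y - y'| :=
    convex_univ.norm_image_sub_le_of_norm_deriv_le (fun x _ => hdiff x) (fun x _ => h1 x)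
      (Set.mem_univ y') (Set.mem_univ y)
  have lip1 (y y' : ℝ) : |deriv g y - deriv g y'| ≤ M₂ * |y - y'| :=
    convex_univ.norm_image_sub_le_of_norm_deriv_le (fun x _ => hdiff' x) (fun x _ => h2 x)
      (Set.mem_univ y') (Set.mem_univ y)
  have bd0 (y y' : ℝ) : |g y - g y'| ≤ 2 * M₀ := by
    have := abs_sub (g y) (g y')
    linarith [h0 y, h0 y']
  have large (y y' : ℝ) (h : 1 ≤ |y - y'|) : 1 ≤ |y - y'| ^ b := Real.one_le_rpow h hb0.le
  rcases le_or_gt b 1 with hb1 | hb1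
  · refine ⟨hg.of_le ?_, fun y y' => ?_⟩
    · rw [hfl_of_le_one hb1]; norm_num
    rw [hfl_of_le_one hb1, taylorPoly_zero]
    rcases le_total |y - y'| 1 with hs | hs
    · have : |y - y'| ≤ |y - y'| ^ b := by
        simpa using Real.rpow_le_rpow_of_exponent_ge_of_imp (abs_nonneg (y - y')) hs hb1
          (fun _ h => absurd h one_ne_zero)
      calc |g y - g y'| ≤ M₁ * |y - y'| ^ b := (lip0 y y').trans (by gcongr)
        _ ≤ _ := by gcongr; linarith
    · calc |g y - g y'| ≤ 2 * M₀ * 1 := by linarith [bd0 y y']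
        _ ≤ (2 * M₀ + M₁ + M₂) * |y - y'| ^ b := by
          gcongr
          · linarith
          · exact large _ _ hs
  · refine ⟨hg.of_le ?_, fun y y' => ?_⟩
    · rw [hfl_of_one_lt hb1 hb]; norm_num
    rw [hfl_of_one_lt hb1 hb, taylorPoly_one]
    rcases le_total |y - y'| 1 with hs | hs
    · have hpow : |y - y'| ^ 2 ≤ |y - y'| ^ b := by
        simpa using Real.rpow_le_rpow_of_exponent_ge_of_imp (abs_nonneg (y - y')) hs hb
          (fun _ h => absurd h two_ne_zero)
      have key : |(g y - deriv g y' * y) - (g y' - deriv g y' * y')|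
          ≤ M₂ * |y - y'| * |y - y'| := by
        refine (convex_uIcc y' y).norm_image_sub_le_of_norm_hasDerivWithin_le
          (f := fun z => g z - deriv g y' * z) (f' := fun z => deriv g z - deriv g y')
          (fun z _ => ?_) (fun z hz => ?_) Set.left_mem_uIcc Set.right_mem_uIcc
        · simpa using! ((hdiff z).hasDerivAt.sub
            ((hasDerivAt_id z).const_mul (deriv g y'))).hasDerivWithinAt
        · refine (lip1 z y').trans ?_
          exact mul_le_mul_of_nonneg_left (Set.abs_sub_left_of_mem_uIcc hz) hM2
      calc |g y - (g y' + deriv g y' * (y - y'))|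
          = |(g y - deriv g y' * y) - (g y' - deriv g y' * y')| := by ring_nf
        _ ≤ M₂ * |y - y'| ^ 2 := by rw [pow_two, ← mul_assoc]; exact key
        _ ≤ M₂ * |y - y'| ^ b := by gcongr
        _ ≤ _ := by gcongr; linarith
    · have hpow : |y - y'| ≤ |y - y'| ^ b := by
        simpa using Real.rpow_le_rpow_of_exponent_le hs hb1.le
      calc |g y - (g y' + deriv g y' * (y - y'))|
          = |(g y - g y') + -(deriv g y' * (y - y'))| := by ring_nf
        _ ≤ |g y - g y'| + |deriv g y'| * |y - y'| := by
          rw [← abs_mul, ← abs_neg (deriv g y' * (y - y'))]; exact abs_add_le _ _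
        _ ≤ 2 * M₀ * 1 + M₁ * |y - y'| ^ b := by
          gcongr
          · linarith [bd0 y y']
          · exact h1 y'
        _ ≤ 2 * M₀ * |y - y'| ^ b + M₁ * |y - y'| ^ b := by
          gcongr
          exact large _ _ hs
        _ ≤ _ := by
          rw [← add_mul]
          exact mul_le_mul_of_nonneg_right (by linarith) (by positivity)

/-- A smooth profile `g` with `g 0 = 1`, vanishing integral and support in `[-3, 3]`. -/
theorem exists_profile : ∃ (g : ℝ → ℝ) (G : ℝ), 0 < G ∧ Continuous g ∧ g 0 = 1 ∧
    (∀ y, |g y| ≤ 1) ∧ (∀ y, 3 < |y| → g y = 0) ∧ ∫ y, g y = 0 ∧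
    ∀ b, 0 < b → b ≤ 2 → HolderSlice b G g := by
  let φ : ContDiffBump (0 : ℝ) := ⟨1 / 2, 1, by norm_num, by norm_num⟩
  let g : ℝ → ℝ := fun y => φ y - φ (y - 2)
  have hφ {n : ℕ∞} : ContDiff ℝ n φ := φ.contDiff
  have hg : ContDiff ℝ 2 g :=
    hφ.sub (hφ.comp (contDiff_id.sub contDiff_const))
  have hφ0 (y : ℝ) (hy : 1 ≤ |y|) : φ y = 0 := φ.zero_of_le_dist (by simpa using hy)
  have hsupp (y : ℝ) (hy : 3 < |y|) : g y = 0 := by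
    have h2 : 1 ≤ |y - 2| := by
      have := abs_sub_abs_le_abs_sub y 2
      rw [abs_two] at this
      linarith
    simp only [g, hφ0 y (by linarith), hφ0 (y - 2) h2, sub_zero]
  have hcs : HasCompactSupport g :=
    HasCompactSupport.intro (isCompact_Icc (a := (-3 : ℝ)) (b := 3)) fun y hy => hsupp y <| by
      by_contra h
      exact hy (abs_le.mp (not_lt.mp h))
  have h0 (y : ℝ) : |g y| ≤ 1 := by
    have h1 := φ.nonneg' y
    have h2 := φ.nonneg' (y - 2)
    have h3 := φ.le_one (x := y)
    have h4 := φ.le_one (x := y - 2)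
    simp only [g, abs_le]
    constructor <;> linarith
  have hg' : ContDiff ℝ 1 (deriv g) :=
    (contDiff_succ_iff_deriv (n := 1).1 (by simpa [one_add_one_eq_two] using hg)).2.2
  obtain ⟨M₁, h1⟩ := hcs.deriv.exists_bound_of_continuous hg'.continuous
  obtain ⟨M₂, h2⟩ := hcs.deriv.deriv.exists_bound_of_continuous (hg'.continuous_deriv le_rfl)
  have hM1 : 0 ≤ M₁ := (norm_nonneg _).trans (h1 0)
  have hM2 : 0 ≤ M₂ := (norm_nonneg _).trans (h2 0)
  refine ⟨g, 2 * 1 + M₁ + M₂, by positivity, hg.continuous, ?_, h0, hsupp, ?_,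
    fun b hb0 hb => holderSlice_of_bounded hg h0 h1 h2 hb0 hb⟩
  · have h1 : φ 0 = 1 := φ.one_of_mem_closedBall (by simp [φ])
    have h2 : φ (0 - 2) = 0 := hφ0 _ (by norm_num)
    simp only [g, h1, h2, sub_zero]
  · have hi : Integrable φ := φ.continuous.integrable_of_hasCompactSupport φ.hasCompactSupport
    simp only [g]
    rw [integral_sub hi (hi.comp_sub_right 2), integral_sub_right_eq_self φ 2, sub_self]

/-- A function whose variation along each coordinate is small has small variation on boxes. -/
theorem abs_sub_le_of_coordinatewise {d : ℕ} {f : Vec d → ℝ} {ρ ε : ℝ}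
    (h : ∀ i x y, |y - x i| ≤ ρ → |f (Function.update x i y) - f x| ≤ ε) {x z : Vec d}
    (hz : ∀ i, |z i - x i| ≤ ρ) : |f z - f x| ≤ d * ε := by
  classical
  have key (s : Finset (Fin d)) : |f (s.piecewise z x) - f x| ≤ s.card * ε := by
    induction s using Finset.induction_on with
    | empty => simp
    | insert j s hj ih =>
      have hjx : (s.piecewise z x) j = x j := Finset.piecewise_eq_of_notMem _ _ _ hj
      have h1 := h j (s.piecewise z x) (z j) (by rw [hjx]; exact hz j)
      rw [Finset.piecewise_insert, Finset.card_insert_of_notMem hj]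
      have h2 := abs_sub_le (f (Function.update (s.piecewise z x) j (z j)))
        (f (s.piecewise z x)) (f x)
      push_cast
      linarith
  simpa using key Finset.univ

theorem HolderAniso.exists_uniform_box {d : ℕ} {β : Vec d} {L M ε : ℝ} {p : Vec d → ℝ}
    (hp : HolderAniso d β L p) (hd : 1 ≤ d) (hβ : ∀ i, 0 < β i ∧ β i ≤ 2)
    (hM : ∀ x, |p x| ≤ M) (hε : 0 < ε) :
    ∃ ρ, 0 < ρ ∧ ρ ≤ 1 ∧ ∀ x z : Vec d, (∀ i, |z i - x i| ≤ ρ) → |p z - p x| ≤ ε := by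
  have hd0 : (0 : ℝ) < d := by exact_mod_cast hd
  have hmod (i : Fin d) (x : Vec d) (y : ℝ) (hy : |y - x i| ≤ 1) :
      |p (Function.update x i y) - p x| ≤ (2 * M + 2 * L) * |y - x i| ^ min (β i) 1 := by
    simpa [sliceFun] using (holderAniso_iff.1 hp i x).abs_sub_le (hβ i).1 (hβ i).2
      (fun y => hM _) hy
  have hL0 : 0 ≤ L := by
    simpa using (abs_nonneg _).trans ((hp ⟨0, hd⟩).2 0 1 0)
  have hM0 : 0 ≤ M := (abs_nonneg _).trans (hM 0)
  have hev : ∀ᶠ ρ in nhdsWithin (0 : ℝ) (Set.Ioi 0), ρ ≤ 1 ∧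
      ∀ i, (2 * M + 2 * L) * ρ ^ min (β i) 1 < ε / d := by
    refine (((eventually_le_nhds zero_lt_one).filter_mono nhdsWithin_le_nhds)).and
      (Filter.eventually_all.2 fun i => ?_)
    have hb : 0 < min (β i) 1 := lt_min (hβ i).1 one_pos
    have ht : ContinuousAt (fun ρ : ℝ => (2 * M + 2 * L) * ρ ^ min (β i) 1) 0 :=
      continuousAt_const.mul (Real.continuousAt_rpow_const 0 _ (Or.inr hb.le))
    refine (ht.eventually_lt_const ?_).filter_mono nhdsWithin_le_nhds
    simp only [Real.zero_rpow hb.ne', mul_zero]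
    positivity
  obtain ⟨ρ, ⟨hρ1, hρ⟩, hρ0⟩ := (hev.and self_mem_nhdsWithin).exists
  have hρ0 : 0 < ρ := hρ0
  refine ⟨ρ, hρ0, hρ1, fun x z hz => ?_⟩
  have := abs_sub_le_of_coordinatewise (f := p) (ε := ε / d) (fun i x y hy => ?_) hz
  · rwa [mul_div_cancel₀ _ hd0.ne'] at this
  · refine (hmod i x y (hy.trans hρ1)).trans (le_trans ?_ (hρ i).le)
    have hb : 0 < min (β i) 1 := lt_min (hβ i).1 one_pos
    gcongr

theorem sq_lintegral_mul_le {α : Type*} [MeasurableSpace α] {μ : Measure α} {f g : α → ℝ≥0∞}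
    (hf : AEMeasurable f μ) (hg : AEMeasurable g μ) :
    (∫⁻ x, f x * g x ∂μ) ^ 2 ≤ (∫⁻ x, f x ^ 2 ∂μ) * ∫⁻ x, g x ^ 2 ∂μ := by
  have h := ENNReal.lintegral_mul_le_Lp_mul_Lq μ Real.HolderConjugate.two_two hf hg
  have hs (a : ℝ≥0∞) : (a ^ (1 / 2 : ℝ)) ^ 2 = a := by
    rw [← ENNReal.rpow_natCast, ← ENNReal.rpow_mul]
    norm_num
  calc (∫⁻ x, f x * g x ∂μ) ^ 2
      ≤ ((∫⁻ x, f x ^ (2 : ℝ) ∂μ) ^ (1 / 2 : ℝ) * (∫⁻ x, g x ^ (2 : ℝ) ∂μ) ^ (1 / 2 : ℝ)) ^ 2 := by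
        gcongr; exact h
    _ = _ := by
      rw [mul_pow, hs, hs]
      simp only [ENNReal.rpow_two]

/-- A second-moment domination of `ν` by `μ` tensorizes. -/
theorem sq_lintegral_pi_le {α : Type*} [MeasurableSpace α] {μ ν : Measure α} [SigmaFinite μ]
    [SigmaFinite ν] {C : ℝ≥0∞}
    (h : ∀ F : α → ℝ≥0∞, Measurable F → (∫⁻ x, F x ∂ν) ^ 2 ≤ C * ∫⁻ x, F x ^ 2 ∂μ) (n : ℕ)
    (F : (Fin n → α) → ℝ≥0∞) (hF : Measurable F) :
    (∫⁻ x, F x ∂(Measure.pi fun _ => ν)) ^ 2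
      ≤ C ^ n * ∫⁻ x, F x ^ 2 ∂(Measure.pi fun _ => μ) := by
  induction n with
  | zero =>
    rw [Measure.pi_of_empty, Measure.pi_of_empty, lintegral_dirac, lintegral_dirac]
    simp
  | succ n ih =>
    have e (κ : Measure α) [SigmaFinite κ] (H : (Fin (n + 1) → α) → ℝ≥0∞) (hH : Measurable H) :
        ∫⁻ x, H x ∂(Measure.pi fun _ => κ)
          = ∫⁻ a, ∫⁻ x, H ((MeasurableEquiv.piFinSuccAbove (fun _ => α) 0).symm (a, x))
              ∂(Measure.pi fun _ => κ) ∂κ := by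
      have hm := (measurePreserving_piFinSuccAbove (fun _ : Fin (n + 1) => κ) 0).symm
      rw [← hm.lintegral_comp hH, lintegral_prod _ (by fun_prop)]
    have hmeas : Measurable fun q : α × (Fin n → α) =>
        F ((MeasurableEquiv.piFinSuccAbove (fun _ => α) 0).symm q) := by fun_prop
    rw [e ν F hF, e μ (fun x => F x ^ 2) (by fun_prop)]
    refine (h _ hmeas.lintegral_prod_right').trans ?_
    rw [pow_succ', mul_assoc, ← lintegral_const_mul _ (hmeas.pow_const 2).lintegral_prod_right']
    exact mul_le_mul_right (lintegral_mono fun a => ih _ (hmeas.comp measurable_prodMk_left)) _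

theorem sq_lintegral_pdfMeasure_le {d : ℕ} {p q : Vec d → ℝ} (hp : Measurable p)
    (hq : Measurable q) (hp0 : ∀ x, 0 ≤ p x) (hpq : ∀ x, p x = 0 → q x = 0)
    (F : Vec d → ℝ≥0∞) (hF : Measurable F) :
    (∫⁻ x, F x ∂(pdfMeasure d q)) ^ 2
      ≤ (∫⁻ x, ENNReal.ofReal (q x ^ 2 / p x)) * ∫⁻ x, F x ^ 2 ∂(pdfMeasure d p) := by
  unfold pdfMeasure
  rw [lintegral_withDensity_eq_lintegral_mul _ (by fun_prop) hF,
    lintegral_withDensity_eq_lintegral_mul _ (by fun_prop) (by fun_prop)]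
  have h1 (x : Vec d) : ENNReal.ofReal (q x) * F x
      ≤ ENNReal.ofReal (|q x| / √(p x)) * (ENNReal.ofReal √(p x) * F x) := by
    rw [← mul_assoc, ← ENNReal.ofReal_mul (by positivity)]
    gcongr
    rcases eq_or_ne (p x) 0 with h | h
    · simp [h, hpq x h]
    · rw [div_mul_cancel₀ _ (Real.sqrt_ne_zero'.2 ((hp0 x).lt_of_ne' h))]
      exact le_abs_self _
  calc (∫⁻ x, ENNReal.ofReal (q x) * F x) ^ 2
      ≤ (∫⁻ x, ENNReal.ofReal (|q x| / √(p x)) * (ENNReal.ofReal √(p x) * F x)) ^ 2 := by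
        gcongr ?_ ^ 2; exact lintegral_mono h1
    _ ≤ (∫⁻ x, ENNReal.ofReal (|q x| / √(p x)) ^ 2)
          * ∫⁻ x, (ENNReal.ofReal √(p x) * F x) ^ 2 :=
        sq_lintegral_mul_le (by fun_prop) (by fun_prop)
    _ = _ := by
      congr 1
      · refine lintegral_congr fun x => ?_
        rw [← ENNReal.ofReal_pow (by positivity), div_pow, sq_abs, Real.sq_sqrt (hp0 x)]
      · refine lintegral_congr fun x => ?_
        rw [mul_pow, ← ENNReal.ofReal_pow (by positivity), Real.sq_sqrt (hp0 x)]
        rfl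

theorem IsProbDensity.integrable {d : ℕ} {p : Vec d → ℝ} (hp : IsProbDensity d p) :
    Integrable p := by
  by_contra h
  have := hp.2.2
  rw [integral_undef h] at this
  exact zero_ne_one this

theorem IsProbDensity.isProbabilityMeasure {d : ℕ} {p : Vec d → ℝ} (hp : IsProbDensity d p) :
    IsProbabilityMeasure (pdfMeasure d p) := by
  refine ⟨?_⟩
  rw [pdfMeasure, withDensity_apply _ MeasurableSet.univ, Measure.restrict_univ,
    ← ofReal_integral_eq_lintegral_ofReal hp.integrable (Filter.Eventually.of_forall hp.2.1),
    hp.2.2, ENNReal.ofReal_one]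

theorem ofReal_mul_le_lintegral_rpow {Ω : Type*} [MeasurableSpace Ω] {P : Measure Ω}
    {T : Ω → ℝ} {θ s ψ ψ' r u : ℝ} (hr : 1 ≤ r) (hs : 0 < s) (hψ : 0 < ψ)
    (hψ' : ψ ≤ ψ') {A : Set Ω} (hAm : MeasurableSet A)
    (hA : ∀ x ∈ A, s * ψ' ≤ |T x - θ|) (hPA : ENNReal.ofReal u ≤ P A) :
    ENNReal.ofReal (s ^ r * u) ≤ ∫⁻ x, ENNReal.ofReal ((|T x - θ| / ψ) ^ r) ∂P := by
  have hle (x : Ω) (hx : x ∈ A) :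
      ENNReal.ofReal (s ^ r) ≤ ENNReal.ofReal ((|T x - θ| / ψ) ^ r) := by
    gcongr
    rw [le_div_iff₀ hψ]
    exact le_trans (by gcongr) (hA x hx)
  rw [ENNReal.ofReal_mul (by positivity)]
  calc ENNReal.ofReal (s ^ r) * ENNReal.ofReal u ≤ ENNReal.ofReal (s ^ r) * P A := by gcongr
    _ = ∫⁻ _ in A, ENNReal.ofReal (s ^ r) ∂P := (setLIntegral_const _ _).symm
    _ ≤ ∫⁻ x in A, ENNReal.ofReal ((|T x - θ| / ψ) ^ r) ∂P := setLIntegral_mono' hAm hle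
    _ ≤ _ := setLIntegral_le_lintegral _ _

/-- Le Cam's two-point argument: if `P₁ A ^ 2 ≤ 4 P₀ A` for all events and the parameters are
separated, no statistic estimates both well. -/
theorem two_point_risk {Ω : Type*} [MeasurableSpace Ω] {P₀ P₁ : Measure Ω}
    [IsProbabilityMeasure P₁] {T : Ω → ℝ} (hT : Measurable T) {θ₀ θ₁ c ψ₀ ψ₁ ψ r : ℝ}
    (hr : 1 ≤ r) (hc : 0 < c) (h0 : 0 < ψ₀) (h1 : 0 < ψ₁) (h0' : ψ₀ ≤ ψ) (h1' : ψ₁ ≤ ψ)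
    (hsep : c * ψ ≤ |θ₁ - θ₀|) (hP : ∀ A, MeasurableSet A → P₁ A ^ 2 ≤ 4 * P₀ A) :
    ENNReal.ofReal ((c / 2) ^ r * (1 / 16))
        ≤ ∫⁻ x, ENNReal.ofReal ((|T x - θ₀| / ψ₀) ^ r) ∂P₀ ∨
      ENNReal.ofReal ((c / 2) ^ r * (1 / 16))
        ≤ ∫⁻ x, ENNReal.ofReal ((|T x - θ₁| / ψ₁) ^ r) ∂P₁ := by
  set A : Set Ω := {x | c / 2 * ψ ≤ |T x - θ₀|} with hAdef
  have hA : MeasurableSet A := measurableSet_le measurable_const (by fun_prop)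
  by_cases hPA : ENNReal.ofReal (1 / 16) ≤ P₀ A
  · exact Or.inl (ofReal_mul_le_lintegral_rpow hr (by positivity) h0 h0' hA
      (fun x hx => hx) hPA)
  · refine Or.inr (ofReal_mul_le_lintegral_rpow (A := Aᶜ) hr (by positivity) h1 h1' hA.compl
      (fun x hx => ?_) ?_)
    · have hx' : |T x - θ₀| < c / 2 * ψ := not_le.mp hx
      have := abs_sub_le θ₁ (T x) θ₀
      rw [abs_sub_comm θ₁ (T x)] at this
      linarith
    · have h4 : P₁ A ^ 2 ≤ (1 / 2 : ℝ≥0∞) ^ 2 := by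
        refine (hP A hA).trans ?_
        calc 4 * P₀ A ≤ 4 * ENNReal.ofReal (1 / 16) := by gcongr; exact (not_le.mp hPA).le
          _ = ENNReal.ofReal (1 / 4) := by
            rw [show (4 : ℝ≥0∞) = ENNReal.ofReal 4 by simp, ← ENNReal.ofReal_mul (by norm_num)]
            norm_num
          _ ≤ (1 / 2 : ℝ≥0∞) ^ 2 := by
            rw [show (1 / 2 : ℝ≥0∞) = ENNReal.ofReal (1 / 2) by
              rw [ENNReal.ofReal_div_of_pos two_pos]; simp, ← ENNReal.ofReal_pow (by norm_num)]
            norm_num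
      have h5 : P₁ A ≤ 1 / 2 := (ENNReal.pow_le_pow_left_iff two_ne_zero).1 h4
      rw [prob_compl_eq_one_sub hA]
      calc ENNReal.ofReal (1 / 16) ≤ ENNReal.ofReal (1 / 2) := by gcongr; norm_num
        _ = 1 - 1 / 2 := by
          rw [ENNReal.ofReal_div_of_pos two_pos]; simp [ENNReal.one_sub_inv_two]
        _ ≤ 1 - P₁ A := by gcongr

theorem IsProbDensity.rescale {d : ℕ} (hd : 1 ≤ d) {p : Vec d → ℝ} (hp : IsProbDensity d p)
    {a : ℝ} (ha : 0 < a) (x₀ t : Vec d) :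
    IsProbDensity d fun x => a * p (a ^ (d⁻¹ : ℝ) • (x - t) + x₀) := by
  refine ⟨(hp.1.comp (by fun_prop)).const_mul a, fun x => mul_nonneg ha.le (hp.2.1 _), ?_⟩
  rw [integral_const_mul, integral_sub_right_eq_self (fun x => p (a ^ (d⁻¹ : ℝ) • x + x₀)) t,
    Measure.integral_comp_smul volume (fun x => p (x + x₀)), integral_add_right_eq_self p x₀,
    hp.2.2, Module.finrank_fin_fun, Real.rpow_inv_natCast_pow ha.le (by omega),
    abs_of_pos (inv_pos.2 ha), smul_eq_mul, mul_one, mul_inv_cancel₀ ha.ne']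

theorem HolderAniso.rescale {d : ℕ} {β : Vec d} {L : ℝ} (hL : 0 ≤ L) (hβ : ∀ i, 0 < β i)
    {p : Vec d → ℝ} (hp : HolderAniso d β L p) {a l : ℝ} (ha : 0 < a) (hl : 0 ≤ l) (hl1 : l ≤ 1)
    (x₀ t : Vec d) : HolderAniso d β (a * L) fun x => a * p (l • (x - t) + x₀) := by
  refine holderAniso_iff.2 fun i x => ?_
  have heq : (sliceFun (fun x => a * p (l • (x - t) + x₀)) i x) =
      fun y => a * sliceFun p i (l • (x - t) + x₀) (l * y + (x₀ i - l * t i)) := by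
    funext y
    simp only [sliceFun]
    congr 2
    funext j
    rcases eq_or_ne j i with rfl | h
    · simp; ring
    · simp [Function.update_of_ne h]
  rw [heq]
  refine ((holderAniso_iff.1 hp i (l • (x - t) + x₀)).affine a l _).mono ?_
  rw [abs_of_pos ha, abs_of_nonneg hl]
  have : l ^ β i ≤ 1 := Real.rpow_le_one hl hl1 (hβ i).le
  calc a * l ^ β i * L ≤ a * 1 * L := by gcongr
    _ = a * L := by ring

theorem HolderAniso.add {d : ℕ} {β : Vec d} {L L' : ℝ} {f g : Vec d → ℝ}
    (hf : HolderAniso d β L f) (hg : HolderAniso d β L' g) :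
    HolderAniso d β (L + L') fun x => f x + g x :=
  holderAniso_iff.2 fun i x => (holderAniso_iff.1 hf i x).add (holderAniso_iff.1 hg i x)

theorem HolderAniso.mono {d : ℕ} {β : Vec d} {L L' : ℝ} {f : Vec d → ℝ}
    (hf : HolderAniso d β L f) (h : L ≤ L') : HolderAniso d β L' f :=
  holderAniso_iff.2 fun i x => (holderAniso_iff.1 hf i x).mono h

theorem abs_prod_le_one {ι : Type*} (s : Finset ι) {f : ι → ℝ} (hf : ∀ i, |f i| ≤ 1) :
    |∏ i ∈ s, f i| ≤ 1 := by
  rw [Finset.abs_prod]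
  exact Finset.prod_le_one (fun _ _ => abs_nonneg _) fun i _ => hf i

theorem holderAniso_prod_profile {d : ℕ} {β : Vec d} {g : ℝ → ℝ} {G η K : ℝ}
    (hg : ∀ i, HolderSlice (β i) G g) (hg1 : ∀ y, |g y| ≤ 1) (hG : 0 ≤ G) (hη : 0 ≤ η)
    (s t : Vec d) (hs : ∀ i, 0 ≤ s i) (hK : ∀ i, η * s i ^ β i * G ≤ K) :
    HolderAniso d β K fun x => η * ∏ i, g (s i * (x i - t i)) := by
  refine holderAniso_iff.2 fun i x => ?_
  have heq : (sliceFun (fun x => η * ∏ i, g (s i * (x i - t i))) i x) =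
      fun y => (η * ∏ j ∈ Finset.univ.erase i, g (s j * (x j - t j))) *
        g (s i * y + -(s i * t i)) := by
    funext y
    simp only [sliceFun]
    rw [← Finset.mul_prod_erase _ _ (Finset.mem_univ i), Function.update_self,
      Finset.prod_congr rfl fun j hj => by rw [Function.update_of_ne (Finset.ne_of_mem_erase hj)]]
    rw [show s i * (y - t i) = s i * y + -(s i * t i) by ring]
    ring
  rw [heq]
  refine ((hg i).affine _ (s i) _).mono (le_trans ?_ (hK i))
  rw [abs_of_nonneg (hs i), abs_mul, abs_of_nonneg hη]
  have h1 := abs_prod_le_one (Finset.univ.erase i) fun j => hg1 (s j * (x j - t j))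
  have h2 := Real.rpow_nonneg (hs i) (β i)
  calc η * |∏ j ∈ Finset.univ.erase i, g (s j * (x j - t j))| * s i ^ β i * G
      ≤ η * 1 * s i ^ β i * G := by gcongr
    _ = _ := by ring

theorem integral_prod_profile {d : ℕ} (hd : 1 ≤ d) {g : ℝ → ℝ} (hg : ∫ y, g y = 0) (s t : Vec d)
    (η : ℝ) : ∫ x : Vec d, η * ∏ i, g (s i * (x i - t i)) = 0 := by
  rw [integral_const_mul, integral_fintype_prod_volume_eq_prod fun i y => g (s i * (y - t i)),
    Finset.prod_eq_zero (Finset.mem_univ (⟨0, hd⟩ : Fin d)), mul_zero]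
  rw [integral_sub_right_eq_self (fun y => g (s _ * y)), Measure.integral_comp_mul_left, hg,
    smul_zero]

/-- Perturbing a density by a centered function supported in a box where it is bounded below
gives a density with controlled chi-square distance. -/
theorem IsProbDensity.add_perturbation {d : ℕ} {p h : Vec d → ℝ} (hp : IsProbDensity d p)
    (hm : Measurable h) (hint : ∫ x, h x = 0) {η m : ℝ} (hη : ∀ x, |h x| ≤ η) (hm0 : 0 < m)
    (hηm : η ≤ m) {u v : Vec d} (huv : u ≤ v) (hsupp : ∀ x, x ∉ Set.Icc u v → h x = 0)
    (hpm : ∀ x ∈ Set.Icc u v, m ≤ p x) :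
    IsProbDensity d (fun x => p x + h x) ∧
      ∫⁻ x, ENNReal.ofReal ((p x + h x) ^ 2 / p x)
        ≤ ENNReal.ofReal (1 + η ^ 2 / m * ∏ i, (v i - u i)) := by
  have hvol : volume (Set.Icc u v) ≠ ⊤ := isCompact_Icc.measure_lt_top.ne
  have hind (c : ℝ) : Integrable ((Set.Icc u v).indicator fun _ : Vec d => c) :=
    (integrable_indicator_iff measurableSet_Icc).2 (integrableOn_const hvol)
  have hi : Integrable h := by
    refine (hind η).mono' hm.aestronglyMeasurable (Filter.Eventually.of_forall fun x => ?_)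
    by_cases hx : x ∈ Set.Icc u v
    · simpa [Set.indicator_of_mem hx] using hη x
    · simp [Set.indicator_of_notMem hx, hsupp x hx]
  have hnn (x : Vec d) : 0 ≤ p x + h x := by
    by_cases hx : x ∈ Set.Icc u v
    · linarith [hpm x hx, (abs_le.1 (hη x)).1]
    · simpa [hsupp x hx] using hp.2.1 x
  refine ⟨⟨hp.1.add hm, hnn, by rw [integral_add hp.integrable hi, hp.2.2, hint, add_zero]⟩, ?_⟩
  have hle (x : Vec d) : (p x + h x) ^ 2 / p x
      ≤ p x + 2 * h x + (Set.Icc u v).indicator (fun _ => η ^ 2 / m) x := by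
    by_cases hx : x ∈ Set.Icc u v
    · rw [Set.indicator_of_mem hx]
      have hpx : 0 < p x := hm0.trans_le (hpm x hx)
      have h2 : h x ^ 2 / p x ≤ η ^ 2 / m := by
        have h3 : h x ^ 2 ≤ η ^ 2 := sq_le_sq.2 ((hη x).trans (le_abs_self η))
        gcongr
        exact hpm x hx
      calc (p x + h x) ^ 2 / p x = p x + 2 * h x + h x ^ 2 / p x := by field_simp; ring
        _ ≤ _ := by gcongr
    · rw [Set.indicator_of_notMem hx, hsupp x hx]
      rcases eq_or_ne (p x) 0 with h0 | h0
      · simp [h0]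
      · simp [pow_two, h0]
  have hi2 : Integrable fun x => p x + 2 * h x := hp.integrable.add (hi.const_mul 2)
  calc ∫⁻ x, ENNReal.ofReal ((p x + h x) ^ 2 / p x)
      ≤ ∫⁻ x, ENNReal.ofReal
          (p x + 2 * h x + (Set.Icc u v).indicator (fun _ => η ^ 2 / m) x) :=
        lintegral_mono fun x => ENNReal.ofReal_le_ofReal (hle x)
    _ = ENNReal.ofReal
          (∫ x, (p x + 2 * h x + (Set.Icc u v).indicator (fun _ => η ^ 2 / m) x)) :=
        (ofReal_integral_eq_lintegral_ofReal (hi2.add (hind _)) (Filter.Eventually.of_forall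
          fun x => (div_nonneg (sq_nonneg _) (hp.2.1 x)).trans (hle x))).symm
    _ = _ := by
      rw [integral_add hi2 (hind _), integral_add hp.integrable (hi.const_mul 2),
        integral_const_mul, hint, hp.2.2, integral_indicator measurableSet_Icc, setIntegral_const,
        Measure.real, Real.volume_Icc_pi_toReal huv, smul_eq_mul]
      ring_nf

theorem isProbabilityMeasure_jointMeasure {d n : ℕ} {p : Vec d → ℝ} (hp : IsProbDensity d p) :
    IsProbabilityMeasure (jointMeasure d n p) := by
  have := hp.isProbabilityMeasure
  unfold jointMeasure
  infer_instance

theorem sq_jointMeasure_le {d n : ℕ} {p q : Vec d → ℝ} (hp : IsProbDensity d p)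
    (hq : IsProbDensity d q) (hpq : ∀ x, p x = 0 → q x = 0) {χ : ℝ} (hχ0 : 0 ≤ χ)
    (hχ : ∫⁻ x, ENNReal.ofReal (q x ^ 2 / p x) ≤ ENNReal.ofReal (1 + χ)) (hn : n * χ ≤ 1)
    {A : Set (Sample d n)} (hA : MeasurableSet A) :
    jointMeasure d n q A ^ 2 ≤ 4 * jointMeasure d n p A := by
  have := hp.isProbabilityMeasure
  have := hq.isProbabilityMeasure
  have h := sq_lintegral_pi_le (fun F hF => (sq_lintegral_pdfMeasure_le hp.1 hq.1 hp.2.1 hpq F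
    hF).trans (mul_le_mul_left hχ _)) n (A.indicator 1) (measurable_one.indicator hA)
  have hsq : (fun x => A.indicator (1 : Sample d n → ℝ≥0∞) x ^ 2) = A.indicator 1 := by
    funext x
    by_cases hx : x ∈ A <;> simp [hx]
  rw [hsq, lintegral_indicator_one hA, lintegral_indicator_one hA] at h
  refine h.trans ?_
  unfold jointMeasure
  gcongr
  rw [← ENNReal.ofReal_pow (by positivity), show (4 : ℝ≥0∞) = ENNReal.ofReal 4 by simp]
  gcongr
  calc (1 + χ) ^ n ≤ rexp χ ^ n := by gcongr; linarith [Real.add_one_le_exp χ]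
    _ = rexp (n * χ) := (Real.exp_nat_mul χ n).symm
    _ ≤ rexp 1 := by gcongr
    _ ≤ 4 := by linarith [Real.exp_one_lt_d9]

theorem psiRate_pos {n : ℕ} (hn : 1 ≤ n) (bb : ℝ) {x : ℝ} (hx : 0 < x) : 0 < psiRate n bb x := by
  have : (0 : ℝ) < n := by exact_mod_cast hn
  exact lt_min hx (by positivity)

theorem psiRate_mono (n : ℕ) {bb x y : ℝ} (hbb : 0 ≤ bb) (hx : 0 ≤ x) (hxy : x ≤ y) :
    psiRate n bb x ≤ psiRate n bb y := by
  unfold psiRate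
  gcongr

theorem mul_psiRate_rpow_le {n : ℕ} (hn : 1 ≤ n) {S x : ℝ} (hS : 0 < S) (hx : 0 < x) :
    n * psiRate n S⁻¹ x ^ (2 + S) ≤ x := by
  have hn0 : (0 : ℝ) < n := by exact_mod_cast hn
  have h1 : psiRate n S⁻¹ x ^ (2 + S) ≤ x / n := by
    calc psiRate n S⁻¹ x ^ (2 + S)
        ≤ ((x / n) ^ (S⁻¹ / (2 * S⁻¹ + 1))) ^ (2 + S) :=
          Real.rpow_le_rpow (psiRate_pos hn _ hx).le (min_le_right _ _) (by positivity)
      _ = x / n := by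
        rw [← Real.rpow_mul (by positivity),
          show S⁻¹ / (2 * S⁻¹ + 1) * (2 + S) = 1 by field_simp, Real.rpow_one]
  rw [le_div_iff₀ hn0] at h1
  linarith

theorem exists_small_constant {d : ℕ} {S c₁ κ ρ : ℝ} (hc₁ : 0 < c₁) (hκ : 0 < κ) (hρ : 0 < ρ) :
    ∃ c : ℝ, 0 < c ∧ c ≤ 1 / 4 ∧ κ * (c * c₁) ≤ (ρ / 3) ^ 2 ∧ 3 * 6 ^ d * κ ^ S * c ≤ 1 := by
  have h1 : 0 < κ * c₁ := by positivity
  have h2 : 0 < 3 * 6 ^ d * κ ^ S := by positivity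
  refine ⟨min (1 / 4) (min ((ρ / 3) ^ 2 / (κ * c₁)) (1 / (3 * 6 ^ d * κ ^ S))), by positivity,
    min_le_left _ _, ?_, ?_⟩
  · have := (min_le_right (1 / 4) _).trans
      (min_le_left ((ρ / 3) ^ 2 / (κ * c₁)) (1 / (3 * 6 ^ d * κ ^ S)))
    rw [le_div_iff₀ h1] at this
    linarith
  · have := (min_le_right (1 / 4) _).trans
      (min_le_right ((ρ / 3) ^ 2 / (κ * c₁)) (1 / (3 * 6 ^ d * κ ^ S)))
    rw [le_div_iff₀ h2] at this
    linarith

/-- Two densities of the class whose values at `t` lie in `[δ/2, δ]` and differ by `c ψ`, and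
whose `n`-fold products are not well separated. -/
theorem exists_two_densities {d : ℕ} (hd : 1 ≤ d) {β : Vec d} (hβ : ∀ i, 0 < β i ∧ β i ≤ 2)
    {L : ℝ} (hL : 0 < L) (hc : 0 < c1const d β L) :
    ∃ c : ℝ, 0 < c ∧ ∀ (t : Vec d) (n : ℕ), 1 ≤ n → ∀ δ : ℝ, 0 < δ → δ ≤ c1const d β L →
      ∃ p q : Vec d → ℝ, Pclass d β L p ∧ Pclass d β L q ∧ δ / 2 ≤ p t ∧ p t ≤ δ ∧
        δ / 2 ≤ q t ∧ q t ≤ δ ∧ q t - p t = c * psiRate n (betaBar β) δ ∧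
        ∀ A, MeasurableSet A → jointMeasure d n q A ^ 2 ≤ 4 * jointMeasure d n p A := by
  set V : Set ℝ := {c | ∃ p x, Pclass d β L p ∧ c = p x}
  set c₁ := c1const d β L
  have hsup : c₁ = sSup V := rfl
  have hne : V.Nonempty := by
    by_contra h
    rw [hsup, Set.not_nonempty_iff_eq_empty.1 h, Real.sSup_empty] at hc
    exact lt_irrefl _ hc
  have hbdd : BddAbove V := by
    by_contra h
    rw [hsup, Real.sSup_of_not_bddAbove h] at hc
    exact lt_irrefl _ hc
  obtain ⟨m, ⟨f, x₀, hf, hmf⟩, hlt⟩ :=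
    exists_lt_of_lt_csSup hne (show 9 / 10 * c₁ < sSup V by rw [← hsup]; linarith)
  have hm : 0 < m := lt_trans (by positivity) hlt
  have hfM (x : Vec d) : |f x| ≤ c₁ := by
    rw [abs_of_nonneg (hf.1.2.1 x)]
    exact le_csSup hbdd ⟨f, x, hf, rfl⟩
  obtain ⟨ρ, hρ0, hρ1, hρ⟩ := hf.2.exists_uniform_box hd hβ hfM (half_pos hm)
  obtain ⟨g, G, hG, hgc, hg0, hg1, hgs, hgi, hgH⟩ := exists_profile
  set S : ℝ := ∑ i, (β i)⁻¹ with hS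
  have hS0 : 0 < S :=
    Finset.sum_pos (fun i _ => inv_pos.2 (hβ i).1) ⟨⟨0, hd⟩, Finset.mem_univ _⟩
  have hbb : betaBar β = S⁻¹ := rfl
  set κ : ℝ := 6 * G / L with hκ
  have hκ0 : 0 < κ := by positivity
  obtain ⟨c, hc0, hc4, hcρ, hcS⟩ := exists_small_constant (d := d) (S := S) hc hκ0 hρ0
  refine ⟨c, hc0, fun t n hn δ hδ hδc => ?_⟩
  have hn0 : (0 : ℝ) < n := by exact_mod_cast hn
  rw [hbb]
  have hrate := mul_psiRate_rpow_le hn hS0 hδ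
  have hψ0 : 0 < psiRate n S⁻¹ δ := psiRate_pos hn _ hδ
  have hψδ : psiRate n S⁻¹ δ ≤ δ := min_le_left _ _
  set ψ := psiRate n S⁻¹ δ
  set η : ℝ := c * ψ with hη
  have hη0 : 0 < η := by positivity
  have hηδ : η ≤ δ / 4 := by
    calc c * ψ ≤ 1 / 4 * δ := by gcongr
      _ = δ / 4 := by ring
  set a : ℝ := 3 * δ / (4 * m) with ha
  have ha0 : 0 < a := by positivity
  have ham : a * m = 3 * δ / 4 := by rw [ha]; field_simp
  have ha1 : a ≤ 5 / 6 := by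
    rw [ha, div_le_iff₀ (by positivity)]
    linarith
  set l : ℝ := a ^ (d⁻¹ : ℝ)
  have hl0 : 0 ≤ l := by positivity
  have hl1 : l ≤ 1 := Real.rpow_le_one ha0.le (by linarith) (by positivity)
  set w : Vec d := fun i => (κ * η) ^ (β i)⁻¹ with hw
  have hκη : 0 < κ * η := by positivity
  have hw0 (i : Fin d) : 0 < w i := Real.rpow_pos_of_pos hκη _
  have hwβ (i : Fin d) : (w i)⁻¹ ^ β i = (κ * η)⁻¹ := by
    rw [Real.inv_rpow (hw0 i).le, hw, ← Real.rpow_mul hκη.le, inv_mul_cancel₀ (hβ i).1.ne',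
      Real.rpow_one]
  have hwρ (i : Fin d) : w i ≤ ρ / 3 := by
    refine (Real.rpow_inv_le_iff_of_pos hκη.le (by positivity) (hβ i).1).2 ?_
    calc κ * η ≤ κ * (c * c₁) := by rw [hη]; gcongr; exact hψδ.trans hδc
      _ ≤ (ρ / 3) ^ 2 := hcρ
      _ = (ρ / 3) ^ (2 : ℝ) := (Real.rpow_two _).symm
      _ ≤ (ρ / 3) ^ β i :=
        Real.rpow_le_rpow_of_exponent_ge (by positivity) (by linarith) (hβ i).2
  set p : Vec d → ℝ := fun x => a * f (l • (x - t) + x₀) with hp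
  set h : Vec d → ℝ := fun x => η * ∏ i, g ((w i)⁻¹ * (x i - t i)) with hh
  have hpt : p t = 3 * δ / 4 := by simp [hp, ← hmf, ham]
  have hht : h t = η := by simp [hh, hg0]
  have hpd : IsProbDensity d p := hf.1.rescale hd ha0 x₀ t
  have hpH : HolderAniso d β (a * L) p :=
    hf.2.rescale hL.le (fun i => (hβ i).1) ha0 hl0 hl1 x₀ t
  have hhH : HolderAniso d β (L / 6) h := by
    refine holderAniso_prod_profile (fun i => hgH _ (hβ i).1 (hβ i).2) hg1 hG.le hη0.le _ t
      (fun i => (inv_pos.2 (hw0 i)).le) fun i => ?_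
    rw [hwβ i, hκ]
    apply le_of_eq
    field_simp
  have hhη (x : Vec d) : |h x| ≤ η := by
    rw [hh, abs_mul, abs_of_pos hη0]
    exact mul_le_of_le_one_right hη0.le (abs_prod_le_one _ fun i => hg1 _)
  have hhm : Measurable h :=
    (continuous_const.mul (continuous_finsetProd _ fun i _ =>
      hgc.comp (by fun_prop))).measurable
  have hsupp (x : Vec d) (hx : x ∉ Set.Icc (t - (3 : ℝ) • w) (t + (3 : ℝ) • w)) : h x = 0 := by
    have : ∃ i, 3 * w i < |x i - t i| := by
      by_contra! hcon
      refine hx ⟨fun i => ?_, fun i => ?_⟩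
      · have := (abs_le.1 (hcon i)).1
        simp only [Pi.sub_apply, Pi.smul_apply, smul_eq_mul]
        linarith
      · have := (abs_le.1 (hcon i)).2
        simp only [Pi.add_apply, Pi.smul_apply, smul_eq_mul]
        linarith
    obtain ⟨i, hi⟩ := this
    rw [hh]
    refine mul_eq_zero_of_right _ (Finset.prod_eq_zero (Finset.mem_univ i) (hgs _ ?_))
    rw [abs_mul, abs_of_pos (inv_pos.2 (hw0 i)), ← div_eq_inv_mul, lt_div_iff₀ (hw0 i)]
    exact hi
  have hpm (x : Vec d) (hx : x ∈ Set.Icc (t - (3 : ℝ) • w) (t + (3 : ℝ) • w)) :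
      3 * δ / 8 ≤ p x := by
    have hclose : |f (l • (x - t) + x₀) - f x₀| ≤ m / 2 := by
      refine hρ x₀ _ fun i => ?_
      have h1 := hx.1 i
      have h2 := hx.2 i
      simp only [Pi.sub_apply, Pi.add_apply, Pi.smul_apply, smul_eq_mul] at h1 h2 ⊢
      have h3 : |x i - t i| ≤ ρ := by
        rw [abs_le]
        constructor <;> linarith [hwρ i]
      rw [add_sub_cancel_right, abs_mul, abs_of_nonneg hl0]
      exact (mul_le_of_le_one_left (abs_nonneg _) hl1).trans h3
    have hfx : m / 2 ≤ f (l • (x - t) + x₀) := by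
      rw [← hmf] at hclose
      linarith [(abs_le.1 hclose).1]
    calc 3 * δ / 8 = a * (m / 2) := by linarith
      _ ≤ p x := mul_le_mul_of_nonneg_left hfx ha0.le
  have hbox : t - (3 : ℝ) • w ≤ t + (3 : ℝ) • w := fun i => by
    simp only [Pi.sub_apply, Pi.add_apply, Pi.smul_apply, smul_eq_mul]
    linarith [hw0 i]
  obtain ⟨hqd, hχ⟩ := hpd.add_perturbation hhm (integral_prod_profile hd hgi _ t η) hhη
    (m := 3 * δ / 8) (by positivity) (by linarith) hbox hsupp hpm
  have hprod : ∏ i, ((t + (3 : ℝ) • w) i - (t - (3 : ℝ) • w) i) = 6 ^ d * (κ * η) ^ S := by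
    have (i : Fin d) : (t + (3 : ℝ) • w) i - (t - (3 : ℝ) • w) i = 6 * (κ * η) ^ (β i)⁻¹ := by
      simp only [Pi.sub_apply, Pi.add_apply, Pi.smul_apply, smul_eq_mul, hw]
      ring
    simp_rw [this]
    rw [Finset.prod_mul_distrib, ← Real.rpow_sum_of_pos hκη]
    simp [hS]
  rw [hprod] at hχ
  have hnχ : n * (η ^ 2 / (3 * δ / 8) * (6 ^ d * (κ * η) ^ S)) ≤ 1 := by
    have hpow : η ^ 2 * η ^ S ≤ c * ψ ^ (2 + S) := by
      rw [← Real.rpow_two, ← Real.rpow_add hη0, hη, Real.mul_rpow hc0.le hψ0.le]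
      gcongr
      simpa using Real.rpow_le_rpow_of_exponent_ge hc0 (by linarith)
        (show (1 : ℝ) ≤ 2 + S by linarith)
    rw [Real.mul_rpow hκ0.le hη0.le]
    calc n * (η ^ 2 / (3 * δ / 8) * (6 ^ d * (κ ^ S * η ^ S)))
        = 8 / 3 * 6 ^ d * κ ^ S * (n * (η ^ 2 * η ^ S)) / δ := by field_simp
      _ ≤ 8 / 3 * 6 ^ d * κ ^ S * (n * (c * ψ ^ (2 + S))) / δ := by gcongr
      _ = 8 / 3 * 6 ^ d * κ ^ S * c * (n * ψ ^ (2 + S)) / δ := by ring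
      _ ≤ 8 / 3 * 6 ^ d * κ ^ S * c * δ / δ := by gcongr
      _ = 8 / 3 * 6 ^ d * κ ^ S * c := by field_simp
      _ ≤ 3 * 6 ^ d * κ ^ S * c := by gcongr; norm_num
      _ ≤ 1 := hcS
  have haL : a * L ≤ 5 / 6 * L := mul_le_mul_of_nonneg_right ha1 hL.le
  refine ⟨p, fun x => p x + h x, ⟨hpd, hpH.mono ?_⟩, ⟨hqd, (hpH.add hhH).mono ?_⟩, ?_, ?_, ?_, ?_,
    ?_, fun A hA => sq_jointMeasure_le hpd hqd (fun x hx => ?_) (by positivity) hχ hnχ hA⟩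
  · linarith
  · linarith
  · linarith
  · linarith
  · beta_reduce; linarith
  · beta_reduce; linarith
  · beta_reduce; linarith
  · have : x ∉ Set.Icc (t - (3 : ℝ) • w) (t + (3 : ℝ) • w) := fun hmem => by
      linarith [hpm x hmem]
    rw [hx, hsupp x this, add_zero]

/-- Theorem 3.1, new weighted lower risk bound.
For `0 < β_i ≤ 2`, `L > 0`, `r ≥ 1` there are `c₂(β,L,r) > 0` and `n₀(β,L)` such that for
every `t`, every `n ≥ n₀`, every `0 < δ ≤ c₁(β,L)` and every estimator `T`, some density
`p ∈ 𝒫_d(β,L)` with `δ/2 ≤ p(t) ≤ δ` has normalized risk at least `c₂`. -/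
theorem statement0 (d : ℕ) (hd : 1 ≤ d) (β : Vec d) (hβ : ∀ i, 0 < β i ∧ β i ≤ 2)
    (L : ℝ) (hL : 0 < L) (r : ℝ) (hr : 1 ≤ r) :
    ∃ (c2 : ℝ) (n0 : ℕ), 0 < c2 ∧
      ∀ (t : Vec d) (n : ℕ), n0 ≤ n →
        ∀ δ : ℝ, 0 < δ → δ ≤ c1const d β L →
          ∀ T : Sample d n → ℝ, Measurable T →
            ∃ p : Vec d → ℝ, Pclass d β L p ∧ δ / 2 ≤ p t ∧ p t ≤ δ ∧
              ENNReal.ofReal c2 ≤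
                ∫⁻ X, ENNReal.ofReal
                  ((|T X - p t| / psiRate n (betaBar β) (p t)) ^ r)
                  ∂(jointMeasure d n p) := by
  rcases le_or_gt (c1const d β L) 0 with hc1 | hc1
  · exact ⟨1, 0, one_pos, fun t n _ δ hδ hδc => absurd (hδ.trans_le hδc) (not_lt.2 hc1)⟩
  obtain ⟨c, hc, h⟩ := exists_two_densities hd hβ hL hc1
  have hbb : 0 ≤ betaBar β :=
    inv_nonneg.2 (Finset.sum_nonneg fun i _ => inv_nonneg.2 (hβ i).1.le)
  refine ⟨(c / 2) ^ r * (1 / 16), 1, by positivity, fun t n hn δ hδ hδc T hT => ?_⟩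
  obtain ⟨p, q, hp, hq, hp1, hp2, hq1, hq2, hpq, hA⟩ := h t n hn δ hδ hδc
  have hp0 : 0 < p t := by linarith
  have hq0 : 0 < q t := by linarith
  have := isProbabilityMeasure_jointMeasure (n := n) hq.1
  rcases two_point_risk (P₀ := jointMeasure d n p) (P₁ := jointMeasure d n q) hT hr hc
    (psiRate_pos hn (betaBar β) hp0) (psiRate_pos hn (betaBar β) hq0)
    (psiRate_mono n hbb hp0.le hp2) (psiRate_mono n hbb hq0.le hq2)
    (hpq.ge.trans (le_abs_self _)) hA with hrisk | hrisk
  · exact ⟨p, hp, hp1, hp2, hrisk⟩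
  · exact ⟨q, hq, hq1, hq2, hrisk⟩
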